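/- (Semantic cut-admissibility) Let P and Q be cut-free named GS4 derivations with conclusions ⊢Γ,A and ⊢Γ,Ā respectively, where all elements of the context Γ are atomic named formulas. Then the composite bl-graph ⟨⟨P⟩⟩ ⊙_A ⟨⟨Q⟩⟩ has at least one edge. -/

import Mathlib

open scoped Classical

noncomputable section

namespace GS4

/-- Named classical propositional formulas over atoms `α`, with names in `ℕ`. -/
inductive NForm (α : Type) : Type
  | atom : ℕ → α → NForm α
  | or   : NForm α → NForm α → NForm α
  | and  : NForm α → NForm α → NForm α

variable {α : Type}

/-- Name-preserving De Morgan negation, w.r.t. an involution `bar` on atoms. -/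
def negF (bar : α → α) : NForm α → NForm α
  | .atom x a => .atom x (bar a)
  | .or A B => .and (negF bar A) (negF bar B)
  | .and A B => .or (negF bar A) (negF bar B)

/-- The set of names occurring in a named formula. -/
def NForm.names : NForm α → Set ℕ
  | .atom x _ => {x}
  | .or A B => A.names ∪ B.names
  | .and A B => A.names ∪ B.names

/-- A named formula is sharing-free if every name occurs at most once in it. -/
def NForm.sharingFree : NForm α → Prop
  | .atom _ _ => True
  | .or A B => A.sharingFree ∧ B.sharingFree ∧ Disjoint A.names B.names
  | .and A B => A.sharingFree ∧ B.sharingFree ∧ Disjoint A.names B.names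

def NForm.isAtom : NForm α → Prop
  | .atom _ _ => True
  | _ => False

/-- Anonymous formulas (shapes): `A ≡ B` iff their shapes coincide. -/
inductive Shape (α : Type) : Type
  | atom : α → Shape α
  | or   : Shape α → Shape α → Shape α
  | and  : Shape α → Shape α → Shape α

def NForm.shape : NForm α → Shape α
  | .atom _ a => .atom a
  | .or A B => .or A.shape B.shape
  | .and A B => .and A.shape B.shape

/-- `HasAtom A x a`: the atomic formula `x:a` occurs in `A`. -/
def HasAtom : NForm α → ℕ → α → Prop
  | .atom y b, x, a => y = x ∧ b = a
  | .or A B, x, a => HasAtom A x a ∨ HasAtom B x a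
  | .and A B, x, a => HasAtom A x a ∨ HasAtom B x a

/-- Names of a finite set of named formulas. -/
def snames (Γ : Finset (NForm α)) : Set ℕ := ⋃ A ∈ Γ, A.names

/-- A finite set of named formulas is sharing-free if all its elements are
sharing-free with pairwise disjoint name sets. -/
def SFSet (Γ : Finset (NForm α)) : Prop :=
  (∀ A ∈ Γ, A.sharingFree) ∧
  ∀ A ∈ Γ, ∀ B ∈ Γ, A ≠ B → Disjoint A.names B.names

/-- `x:a` occurs in some formula of `Γ` (i.e. `Γ[x] = a` for sharing-free `Γ`). -/
def HasAtomS (Γ : Finset (NForm α)) (x : ℕ) (a : α) : Prop :=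
  ∃ A ∈ Γ, HasAtom A x a

/-- Branch sets of named formulas. -/
def BrF : NForm α → Set (Set ℕ)
  | .atom x _ => {{x}}
  | .or A B => {X | ∃ Y ∈ BrF A, ∃ Z ∈ BrF B, X = Y ∪ Z}
  | .and A B => BrF A ∪ BrF B

/-- Branch sets of sequents (finite sharing-free sets of named formulas). -/
def BrS (Γ : Finset (NForm α)) : Set (Set ℕ) :=
  {X | X ⊆ snames Γ ∧ ∀ A ∈ Γ, X ∩ A.names ∈ BrF A}

/-! ## Branch-labeled name graphs -/

/-- A branch-labeled name graph: vertices and a relation between unordered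
pairs of vertices and branch labels. -/
structure BLGraph : Type where
  verts : Set ℕ
  rel : Sym2 ℕ → Set ℕ → Prop

/-- Well-formedness of a bl-graph: related pairs consist of distinct vertices,
labels are sets of vertices, and each edge is included in its labels. -/
def BLGraph.IsBL (G : BLGraph) : Prop :=
  ∀ e X, G.rel e X → ¬ e.IsDiag ∧ X ⊆ G.verts ∧ ∀ v ∈ e, v ∈ X

def BLGraph.Edges (G : BLGraph) : Set (Sym2 ℕ) := {e | ∃ X, G.rel e X}

def BLGraph.Br (G : BLGraph) : Set (Set ℕ) := {X | ∃ e, G.rel e X}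

def BLGraph.union (G H : BLGraph) : BLGraph :=
  ⟨G.verts ∪ H.verts, fun e X => G.rel e X ∨ H.rel e X⟩

/-- Restriction `G↾_S` of a bl-graph. -/
def BLGraph.restrict (G : BLGraph) (S : Set ℕ) : BLGraph :=
  ⟨G.verts ∩ S, fun e X => G.rel e X ∧ X ⊆ S⟩

/-- The interface-relativized edge-branch relation `e ⊰^I_G X`. -/
def BLGraph.relI (G : BLGraph) (I : Set ℕ) (e : Sym2 ℕ) (X : Set ℕ) : Prop :=
  ∃ Y, G.rel e Y ∧ X = Y \ I

/-- `z 0, …, z (n-1)` is an `X`-labeled alternating path between `G` and `H`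
through the interface `I`. -/
def AltPath (G H : BLGraph) (I X : Set ℕ) (n : ℕ) (z : ℕ → ℕ) : Prop :=
  1 < n ∧
  (∀ i < n, ∀ j < n, z i = z j → i = j) ∧
  (∀ i, 0 < i → i + 1 < n → z i ∈ I) ∧
  ((∀ i, i + 1 < n →
      (Even i → G.relI I s(z i, z (i + 1)) X) ∧ (¬ Even i → H.relI I s(z i, z (i + 1)) X)) ∨
   (∀ i, i + 1 < n →
      (Even i → H.relI I s(z i, z (i + 1)) X) ∧ (¬ Even i → G.relI I s(z i, z (i + 1)) X)))

/-- Composition of bl-graphs over an interface `I`. -/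
def BLGraph.comp (G H : BLGraph) (I : Set ℕ) : BLGraph :=
  ⟨(G.verts ∪ H.verts) \ I,
   fun e X => ∃ n z, AltPath G H I X n z ∧ z 0 ∉ I ∧ z (n - 1) ∉ I ∧
     e = s(z 0, z (n - 1))⟩

/-- The weakening operator on bl-graphs: add vertices `V` and extend every
branch label by a member of `Brs`. -/
def blwk (V : Set ℕ) (Brs : Set (Set ℕ)) (G : BLGraph) : BLGraph :=
  ⟨G.verts ∪ V, fun e X => ∃ Y Z, G.rel e Y ∧ Z ∈ Brs ∧ X = Y ∪ Z⟩

/-- The bl-identity graph `id_{A,C}` on a pair of dual formulas. -/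
def blid : NForm α → NForm α → BLGraph
  | .atom x _, .atom y _ => ⟨{x, y}, fun e X => e = s(x, y) ∧ X = {x, y}⟩
  | .or A1 A2, .and C1 C2 =>
      (blwk A2.names (BrF A2) (blid A1 C1)).union (blwk A1.names (BrF A1) (blid A2 C2))
  | .and A1 A2, .or C1 C2 =>
      (blwk C2.names (BrF C2) (blid A1 C1)).union (blwk C1.names (BrF C1) (blid A2 C2))
  | _, _ => ⟨∅, fun _ _ => False⟩

/-! ## Simple name graphs -/

/-- A simple name graph. -/
structure NGraph : Type where
  verts : Set ℕ
  edges : Set (Sym2 ℕ)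

/-- Subgraph relation `H ⊑ G`. -/
def NGraph.Sub (H G : NGraph) : Prop := H.verts ⊆ G.verts ∧ H.edges ⊆ G.edges

def NGraph.union (G H : NGraph) : NGraph := ⟨G.verts ∪ H.verts, G.edges ∪ H.edges⟩

/-- Induced subgraph `G↾_S`. -/
def NGraph.restrict (G : NGraph) (S : Set ℕ) : NGraph :=
  ⟨G.verts ∩ S, {e ∈ G.edges | ∀ v ∈ e, v ∈ S}⟩

/-- Alternating paths between simple name graphs through an interface. -/
def NAltPath (G H : NGraph) (I : Set ℕ) (n : ℕ) (z : ℕ → ℕ) : Prop :=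
  0 < n ∧
  (∀ i < n, ∀ j < n, z i = z j → i = j) ∧
  (∀ i, 0 < i → i + 1 < n → z i ∈ I) ∧
  ((∀ i, i + 1 < n →
      (Even i → s(z i, z (i + 1)) ∈ G.edges) ∧ (¬ Even i → s(z i, z (i + 1)) ∈ H.edges)) ∨
   (∀ i, i + 1 < n →
      (Even i → s(z i, z (i + 1)) ∈ H.edges) ∧ (¬ Even i → s(z i, z (i + 1)) ∈ G.edges)))

/-- Composition of simple name graphs over an interface. -/
def NGraph.comp (G H : NGraph) (I : Set ℕ) : NGraph :=
  ⟨(G.verts ∪ H.verts) \ I,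
   {e | ∃ x y, x ≠ y ∧ x ∈ (G.verts ∪ H.verts) \ I ∧ y ∈ (G.verts ∪ H.verts) \ I ∧
        e = s(x, y) ∧ ∃ n z, NAltPath G H I n z ∧ z 0 = x ∧ z (n - 1) = y}⟩

/-- The identity graph `Id_{A,C}` on a pair of dual formulas. -/
def idg : NForm α → NForm α → NGraph
  | .atom x _, .atom y _ => ⟨{x, y}, {s(x, y)}⟩
  | .or A1 A2, .and C1 C2 => (idg A1 C1).union (idg A2 C2)
  | .and A1 A2, .or C1 C2 => (idg A1 C1).union (idg A2 C2)
  | _, _ => ⟨∅, ∅⟩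

/-- The edgeless (weakening) graph on the names of `Γ`. -/
def wkg (Γ : Finset (NForm α)) : NGraph := ⟨snames Γ, ∅⟩

/-! ## Named GS4 derivations -/

/-- Named GS4 derivation trees. -/
inductive Deriv (α : Type) : Type
  | ax (Γ : Finset (NForm α)) (A C : NForm α)
  | cut (A : NForm α) (P Q : Deriv α)
  | sup (P Q : Deriv α)
  | orI (A B : NForm α) (P : Deriv α)
  | andI (A B : NForm α) (P Q : Deriv α)

/-- Conclusion of a derivation tree. -/
def concl : Deriv α → Finset (NForm α)
  | .ax Γ A C => insert A (insert C Γ)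
  | .cut A P _ => (concl P).erase A
  | .sup P _ => concl P
  | .orI A B P => insert (NForm.or A B) (((concl P).erase A).erase B)
  | .andI A B P _ => insert (NForm.and A B) ((concl P).erase A)

/-- Well-formedness of derivation trees w.r.t. the atom involution `bar`:
each rule is applied correctly to sharing-free named sequents. -/
def WF (bar : α → α) : Deriv α → Prop
  | .ax Γ A C =>
      A.shape = (negF bar C).shape ∧
      A.sharingFree ∧ C.sharingFree ∧ SFSet Γ ∧
      Disjoint A.names C.names ∧
      Disjoint A.names (snames Γ) ∧ Disjoint C.names (snames Γ)
  | .cut A P Q =>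
      WF bar P ∧ WF bar Q ∧
      ∃ Γ : Finset (NForm α), A ∉ Γ ∧ negF bar A ∉ Γ ∧
        concl P = insert A Γ ∧ concl Q = insert (negF bar A) Γ ∧
        A.sharingFree ∧ SFSet Γ ∧ Disjoint A.names (snames Γ)
  | .sup P Q => WF bar P ∧ WF bar Q ∧ concl P = concl Q
  | .orI A B P =>
      WF bar P ∧
      ∃ Γ : Finset (NForm α), A ∉ Γ ∧ B ∉ Γ ∧ A ≠ B ∧
        concl P = insert A (insert B Γ) ∧
        A.sharingFree ∧ B.sharingFree ∧ SFSet Γ ∧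
        Disjoint A.names B.names ∧
        Disjoint A.names (snames Γ) ∧ Disjoint B.names (snames Γ)
  | .andI A B P Q =>
      WF bar P ∧ WF bar Q ∧
      ∃ Γ : Finset (NForm α), A ∉ Γ ∧ B ∉ Γ ∧
        concl P = insert A Γ ∧ concl Q = insert B Γ ∧
        A.sharingFree ∧ B.sharingFree ∧ SFSet Γ ∧
        Disjoint A.names B.names ∧
        Disjoint A.names (snames Γ) ∧ Disjoint B.names (snames Γ)

/-- A derivation is cut-free if it contains no cut rule. -/
def CutFree : Deriv α → Prop
  | .ax _ _ _ => True
  | .cut _ _ _ => False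
  | .sup P Q => CutFree P ∧ CutFree Q
  | .orI _ _ P => CutFree P
  | .andI _ _ P Q => CutFree P ∧ CutFree Q

/-- The branch-labeled axiom graph `⟨⟨P⟩⟩` of a derivation. -/
def blaxg : Deriv α → BLGraph
  | .ax Γ A C => blwk (snames Γ) (BrS Γ) (blid A C)
  | .cut A P Q => BLGraph.comp (blaxg P) (blaxg Q) A.names
  | .sup P Q => (blaxg P).union (blaxg Q)
  | .orI _ _ P => blaxg P
  | .andI _ _ P Q => (blaxg P).union (blaxg Q)

/-- The (simple) axiom graph `⟦P⟧` of a derivation. -/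
def axg : Deriv α → NGraph
  | .ax Γ A C => (wkg Γ).union (idg A C)
  | .cut A P Q => NGraph.comp (axg P) (axg Q) A.names
  | .sup P Q => (axg P).union (axg Q)
  | .orI _ _ P => axg P
  | .andI _ _ P Q => (axg P).union (axg Q)

/-! ## Inversion and isolation -/

/-- Inversion of a disjunction `D ∨ E` in the conclusion. -/
def inv (D E : NForm α) : Deriv α → Deriv α
  | .ax Γ A C =>
      if A = NForm.or D E then
        match C with
        | .and C1 C2 =>
            .andI C1 C2 (.ax (insert E Γ) D C1) (.ax (insert D Γ) E C2)
        | _ => .ax Γ A C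
      else if C = NForm.or D E then
        match A with
        | .and A1 A2 =>
            .andI A1 A2 (.ax (insert E Γ) A1 D) (.ax (insert D Γ) A2 E)
        | _ => .ax Γ A C
      else
        .ax (insert D (insert E (Γ.erase (NForm.or D E)))) A C
  | .cut A P Q => .cut A (inv D E P) (inv D E Q)
  | .sup P Q => .sup (inv D E P) (inv D E Q)
  | .orI A B P => if A = D ∧ B = E then P else .orI A B (inv D E P)
  | .andI A B P Q => .andI A B (inv D E P) (inv D E Q)

/-- Left inversion of a conjunction `D ∧ E` in the conclusion. -/
def invl (D E : NForm α) : Deriv α → Deriv α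
  | .ax Γ A C =>
      if A = NForm.and D E then
        match C with
        | .or C1 C2 => .orI C1 C2 (.ax (insert C2 Γ) D C1)
        | _ => .ax Γ A C
      else if C = NForm.and D E then
        match A with
        | .or A1 A2 => .orI A1 A2 (.ax (insert A2 Γ) A1 D)
        | _ => .ax Γ A C
      else
        .ax (insert D (Γ.erase (NForm.and D E))) A C
  | .cut A P Q => .cut A (invl D E P) (invl D E Q)
  | .sup P Q => .sup (invl D E P) (invl D E Q)
  | .orI A B P => .orI A B (invl D E P)
  | .andI A B P Q => if A = D ∧ B = E then P else .andI A B (invl D E P) (invl D E Q)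

/-- Right inversion of a conjunction `D ∧ E` in the conclusion. -/
def invr (D E : NForm α) : Deriv α → Deriv α
  | .ax Γ A C =>
      if A = NForm.and D E then
        match C with
        | .or C1 C2 => .orI C1 C2 (.ax (insert C1 Γ) E C2)
        | _ => .ax Γ A C
      else if C = NForm.and D E then
        match A with
        | .or A1 A2 => .orI A1 A2 (.ax (insert A1 Γ) A2 E)
        | _ => .ax Γ A C
      else
        .ax (insert E (Γ.erase (NForm.and D E))) A C
  | .cut A P Q => .cut A (invr D E P) (invr D E Q)
  | .sup P Q => .sup (invr D E P) (invr D E Q)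
  | .orI A B P => .orI A B (invr D E P)
  | .andI A B P Q => if A = D ∧ B = E then Q else .andI A B (invr D E P) (invr D E Q)

/-- Isolation of a non-atomic formula in the conclusion. -/
def isl : NForm α → Deriv α → Deriv α
  | .or A B, P => .orI A B (inv A B P)
  | .and A B, P => .andI A B (invl A B P) (invr A B P)
  | .atom _ _, P => P

/-- Totality of a bl-graph w.r.t. a sharing-free named sequent. -/
def Total (bar : α → α) (G : BLGraph) (Γ : Finset (NForm α)) : Prop :=
  G.verts = snames Γ ∧
  G.Br = BrS Γ ∧
  ∀ x y : ℕ, s(x, y) ∈ G.Edges →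
    ∀ a b : α, HasAtomS Γ x a → HasAtomS Γ y b → a = bar b

end GS4

/-!
Call a bl-graph total for a sequent `Γ` if its labels are exactly the branches of `Γ` and its edges
join names of dual atoms. A total graph has an edge because every sequent has a branch, and every
rule of GS4 preserves totality, cut included; so the composite is total.

The point is the cut on `A`. Fix a branch `X` of `Γ`, make one atom of each dual pair positive, and
orient the edges labelled `X` off `A` from negative to positive names. Crossing from one graph to
the other at a name of `A` flips its sign, so a directed path alternates between the graphs, and it
is complete as soon as it runs from a negative to a positive name of `Γ`. If there is no such path,
the names reachable from negative names of `Γ` determine a set `T` such that every edge labelled `X`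
has an endpoint in `A` lying in `T` if it comes from the first graph, and outside `T` if it comes
from the second. But either a branch of `A` avoids `T` or a branch of its negation lies within `T`,
and totality then provides an edge violating this.
-/

namespace GS4

open scoped SetFamily

/-! ## Paths and alternation -/

theorem exists_nodup_isChain_of_reflTransGen {V : Type*} {r : V → V → Prop} {s t : V}
    (h : Relation.ReflTransGen r s t) :
    ∃ l, (s :: l).IsChain r ∧ (s :: l).getLast (List.cons_ne_nil s l) = t ∧ (s :: l).Nodup := by
  induction h using Relation.ReflTransGen.head_induction_on with
  | refl => exact ⟨[], by simp⟩
  | @head u v huv _ ih =>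
    obtain ⟨l, hchain, hlast, hnodup⟩ := ih
    by_cases hu : u ∈ v :: l
    · obtain ⟨l₁, l₂, hl⟩ := List.append_of_mem hu
      simp only [hl] at hchain hlast hnodup
      exact ⟨l₂, hchain.right_of_append, by simpa using hlast,
        hnodup.sublist (List.sublist_append_right l₁ _)⟩
    · exact ⟨v :: l, hchain.cons_cons huv, by simpa using hlast, hnodup.cons hu⟩

theorem exists_injOn_path_of_reflTransGen {V : Type*} {r : V → V → Prop} {s t : V}
    (h : Relation.ReflTransGen r s t) :
    ∃ (n : ℕ) (z : ℕ → V), z 0 = s ∧ z n = t ∧ Set.InjOn z (Set.Iic n) ∧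
      ∀ i < n, r (z i) (z (i + 1)) := by
  obtain ⟨l, hchain, hlast, hnodup⟩ := exists_nodup_isChain_of_reflTransGen h
  have get {i : ℕ} (hi : i ≤ l.length) : (s :: l).getD i s = (s :: l)[i]'(by simpa using hi) :=
    List.getD_eq_getElem _ _ (by simp; omega)
  refine ⟨l.length, fun i => (s :: l).getD i s, rfl, ?_, fun i hi j hj hij => ?_, fun i hi => ?_⟩
  · rw [← hlast, List.getLast_eq_getElem]
    exact get le_rfl
  · simp only [get hi, get hj] at hij
    exact (hnodup.getElem_inj_iff).1 hij
  · simp only [get hi.le, get hi]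
    exact List.isChain_iff_getElem.1 hchain i _

theorem even_odd_of_alternation {n : ℕ} {g h : ℕ → Prop} (h0 : g 0)
    (hgh : ∀ i, i + 1 < n → Even i → g i → h (i + 1))
    (hhg : ∀ i, i + 1 < n → ¬ Even i → h i → g (i + 1)) :
    ∀ i < n, (Even i → g i) ∧ (¬ Even i → h i) := by
  intro i
  induction i with
  | zero => simp [h0]
  | succ i ih =>
    intro hi
    obtain ⟨hg, hh⟩ := ih (by omega)
    rw [Nat.even_add_one, not_not]
    exact ⟨fun hodd => hhg i hi hodd (hh hodd), fun heven => hgh i hi heven (hg heven)⟩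

variable {α : Type} {bar : α → α} {A B C D : NForm α} {Γ Δ Γ₁ Γ₂ : Finset (NForm α)}
  {G H : BLGraph} {I X : Set ℕ} {x y : ℕ} {a b : α}

/-! ## Names and atoms -/

theorem NForm.mem_names_iff : x ∈ A.names ↔ ∃ a, HasAtom A x a := by
  induction A with
  | atom y b => simp [NForm.names, HasAtom, eq_comm]
  | or A B ihA ihB | and A B ihA ihB => simp [NForm.names, HasAtom, ihA, ihB, exists_or]

theorem HasAtom.mem_names (h : HasAtom A x a) : x ∈ A.names :=
  NForm.mem_names_iff.2 ⟨a, h⟩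

theorem HasAtom.unique (hA : A.sharingFree) (ha : HasAtom A x a) (hb : HasAtom A x b) :
    a = b := by
  induction A with
  | atom y c => exact ha.2.symm.trans hb.2
  | or A B ihA ihB | and A B ihA ihB =>
    obtain ⟨hA, hB, hd⟩ := hA
    rcases ha with ha | ha <;> rcases hb with hb | hb
    · exact ihA hA ha hb
    · exact (Set.disjoint_left.1 hd ha.mem_names hb.mem_names).elim
    · exact (Set.disjoint_left.1 hd hb.mem_names ha.mem_names).elim
    · exact ihB hB ha hb

theorem mem_snames_iff : x ∈ snames Γ ↔ ∃ a, HasAtomS Γ x a := by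
  simp only [snames, Set.mem_iUnion, NForm.mem_names_iff, HasAtomS]
  tauto

theorem HasAtomS.mem_snames (h : HasAtomS Γ x a) : x ∈ snames Γ :=
  mem_snames_iff.2 ⟨a, h⟩

theorem names_subset_snames (hA : A ∈ Γ) : A.names ⊆ snames Γ :=
  Set.subset_biUnion_of_mem (u := NForm.names) hA

theorem snames_singleton (A : NForm α) : snames {A} = A.names := by
  simp [snames]

theorem snames_insert (A : NForm α) (Γ : Finset (NForm α)) :
    snames (insert A Γ) = A.names ∪ snames Γ := by
  simp [snames]

theorem snames_union (Γ Δ : Finset (NForm α)) : snames (Γ ∪ Δ) = snames Γ ∪ snames Δ :=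
  Finset.set_biUnion_union Γ Δ NForm.names

theorem hasAtomS_insert : HasAtomS (insert A Γ) x a ↔ HasAtom A x a ∨ HasAtomS Γ x a := by
  simp [HasAtomS]

theorem hasAtomS_insert_of_notMem (hx : x ∉ A.names) :
    HasAtomS (insert A Γ) x a ↔ HasAtomS Γ x a := by
  rw [hasAtomS_insert, or_iff_right fun h => hx h.mem_names]

theorem hasAtomS_insert_of_mem (hd : Disjoint A.names (snames Γ)) (hx : x ∈ A.names) :
    HasAtomS (insert A Γ) x a ↔ HasAtom A x a := by
  rw [hasAtomS_insert, or_iff_left fun h => Set.disjoint_left.1 hd hx h.mem_snames]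

theorem HasAtomS.mono (hsub : Γ ⊆ Δ) (h : HasAtomS Γ x a) : HasAtomS Δ x a :=
  h.imp fun _ => And.imp_left (@hsub _)

/-! ## Sharing-free sequents -/

theorem HasAtomS.unique (hΓ : SFSet Γ) (ha : HasAtomS Γ x a) (hb : HasAtomS Γ x b) : a = b := by
  obtain ⟨A, hA, ha⟩ := ha
  obtain ⟨B, hB, hb⟩ := hb
  obtain rfl : A = B := by
    by_contra hne
    exact Set.disjoint_left.1 (hΓ.2 A hA B hB hne) ha.mem_names hb.mem_names
  exact ha.unique (hΓ.1 A hA) hb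

theorem SFSet.mono (hΔ : SFSet Δ) (hsub : Γ ⊆ Δ) : SFSet Γ :=
  ⟨fun A hA => hΔ.1 A (hsub hA), fun A hA B hB => hΔ.2 A (hsub hA) B (hsub hB)⟩

theorem SFSet.disjoint_snames (h : SFSet (insert A Γ)) (hA : A ∉ Γ) :
    Disjoint A.names (snames Γ) := by
  refine Set.disjoint_iUnion₂_right.2 fun B hB => ?_
  exact h.2 A (Finset.mem_insert_self A Γ) B (Finset.mem_insert_of_mem hB) fun h => hA (h ▸ hB)

theorem SFSet.union (hΓ : SFSet Γ) (hΔ : SFSet Δ) (hd : Disjoint (snames Γ) (snames Δ)) :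
    SFSet (Γ ∪ Δ) := by
  refine ⟨fun A hA => (Finset.mem_union.1 hA).elim (hΓ.1 A) (hΔ.1 A), fun A hA B hB hne => ?_⟩
  rcases Finset.mem_union.1 hA with hA | hA <;> rcases Finset.mem_union.1 hB with hB | hB
  · exact hΓ.2 A hA B hB hne
  · exact hd.mono (names_subset_snames hA) (names_subset_snames hB)
  · exact (hd.mono (names_subset_snames hB) (names_subset_snames hA)).symm
  · exact hΔ.2 A hA B hB hne

theorem sfSet_singleton (hA : A.sharingFree) : SFSet {A} := by
  refine ⟨fun B hB => Finset.mem_singleton.1 hB ▸ hA, fun B hB C hC hne => ?_⟩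
  exact (hne ((Finset.mem_singleton.1 hB).trans (Finset.mem_singleton.1 hC).symm)).elim

theorem SFSet.insert_formula (hΓ : SFSet Γ) (hA : A.sharingFree)
    (hd : Disjoint A.names (snames Γ)) : SFSet (insert A Γ) := by
  rw [Finset.insert_eq]
  exact (sfSet_singleton hA).union hΓ (by rwa [snames_singleton])

theorem negF_negF (hbar : Function.Involutive bar) (A : NForm α) : negF bar (negF bar A) = A := by
  induction A with
  | atom x a => simp [negF, hbar a]
  | or A B ihA ihB | and A B ihA ihB => simp [negF, ihA, ihB]

theorem names_negF (bar : α → α) (A : NForm α) : (negF bar A).names = A.names := by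
  induction A with
  | atom x a => rfl
  | or A B ihA ihB | and A B ihA ihB => simp [negF, NForm.names, ihA, ihB]

theorem HasAtom.negF (bar : α → α) (h : HasAtom A x a) : HasAtom (negF bar A) x (bar a) := by
  induction A with
  | atom y b => exact ⟨h.1, congrArg bar h.2⟩
  | or A B ihA ihB | and A B ihA ihB => exact h.imp ihA ihB

theorem HasAtomS.insert_negF (bar : α → α) (hd : Disjoint A.names (snames Γ)) (hx : x ∈ A.names)
    (h : HasAtomS (insert A Γ) x a) : HasAtomS (insert (GS4.negF bar A) Γ) x (bar a) :=
  hasAtomS_insert.2 (Or.inl (((hasAtomS_insert_of_mem hd hx).1 h).negF bar))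

/-! ## Branch sets -/

theorem BrF_or (A B : NForm α) : BrF (.or A B) = BrF A ⊻ BrF B := by
  ext X
  simp [BrF, eq_comm]

theorem BrF_and (A B : NForm α) : BrF (.and A B) = BrF A ∪ BrF B :=
  rfl

theorem subset_names_of_mem_BrF (h : X ∈ BrF A) : X ⊆ A.names := by
  induction A generalizing X with
  | atom x a => exact (Set.mem_singleton_iff.1 h).subset
  | or A B ihA ihB =>
    obtain ⟨Y, hY, Z, hZ, rfl⟩ := h
    exact Set.union_subset_union (ihA hY) (ihB hZ)
  | and A B ihA ihB =>
    rcases h with h | h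
    · exact (ihA h).trans Set.subset_union_left
    · exact (ihB h).trans Set.subset_union_right

theorem BrF_nonempty (A : NForm α) : (BrF A).Nonempty := by
  induction A with
  | atom x _ => exact Set.singleton_nonempty ({x} : Set ℕ)
  | or A B ihA ihB => exact BrF_or A B ▸ ihA.sups ihB
  | and A B ihA _ => exact ihA.inl

theorem exists_mem_BrF_disjoint_or_exists_subset (bar : α → α) (A : NForm α) (T : Set ℕ) :
    (∃ X ∈ BrF A, Disjoint X T) ∨ ∃ X ∈ BrF (negF bar A), X ⊆ T := by
  induction A with
  | atom x a =>
    by_cases h : x ∈ T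
    · exact Or.inr ⟨{x}, rfl, Set.singleton_subset_iff.2 h⟩
    · exact Or.inl ⟨{x}, rfl, Set.disjoint_singleton_left.2 h⟩
  | or A B ihA ihB =>
    rcases ihA with ⟨X, hX, hXT⟩ | ⟨X, hX, hXT⟩
    · rcases ihB with ⟨Y, hY, hYT⟩ | ⟨Y, hY, hYT⟩
      · exact Or.inl ⟨X ∪ Y, ⟨X, hX, Y, hY, rfl⟩, hXT.union_left hYT⟩
      · exact Or.inr ⟨Y, Or.inr hY, hYT⟩
    · exact Or.inr ⟨X, Or.inl hX, hXT⟩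
  | and A B ihA ihB =>
    rcases ihA with ⟨X, hX, hXT⟩ | ⟨X, hX, hXT⟩
    · exact Or.inl ⟨X, Or.inl hX, hXT⟩
    · rcases ihB with ⟨Y, hY, hYT⟩ | ⟨Y, hY, hYT⟩
      · exact Or.inl ⟨Y, Or.inr hY, hYT⟩
      · exact Or.inr ⟨X ∪ Y, ⟨X, hX, Y, hY, rfl⟩, Set.union_subset hXT hYT⟩

theorem BrS_singleton (A : NForm α) : BrS {A} = BrF A := by
  ext X
  simp only [BrS, snames_singleton, Finset.mem_singleton, forall_eq, Set.mem_ofPred_eq]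
  constructor
  · rintro ⟨hsub, hX⟩
    rwa [Set.inter_eq_left.2 hsub] at hX
  · intro hX
    have hsub := subset_names_of_mem_BrF hX
    exact ⟨hsub, by rwa [Set.inter_eq_left.2 hsub]⟩

theorem BrS_union (hd : Disjoint (snames Γ) (snames Δ)) : BrS (Γ ∪ Δ) = BrS Γ ⊻ BrS Δ := by
  ext X
  simp only [Set.mem_sups]
  constructor
  · rintro ⟨hsub, hX⟩
    have restrict {Θ : Finset (NForm α)} (hΘ : Θ ⊆ Γ ∪ Δ) : X ∩ snames Θ ∈ BrS Θ := by
      refine ⟨Set.inter_subset_right, fun A hA => ?_⟩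
      rw [Set.inter_assoc, Set.inter_eq_right.2 (names_subset_snames hA)]
      exact hX A (hΘ hA)
    refine ⟨_, restrict Finset.subset_union_left, _, restrict Finset.subset_union_right, ?_⟩
    change X ∩ snames Γ ∪ X ∩ snames Δ = X
    rw [← Set.inter_union_distrib_left, ← snames_union,
      Set.inter_eq_left.2 hsub]
  · rintro ⟨Y, ⟨hYsub, hY⟩, Z, ⟨hZsub, hZ⟩, rfl⟩
    refine ⟨snames_union Γ Δ ▸ Set.union_subset_union hYsub hZsub, fun A hA => ?_⟩
    change (Y ∪ Z) ∩ A.names ∈ BrF A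
    rw [Set.union_inter_distrib_right]
    rcases Finset.mem_union.1 hA with hA | hA
    · rw [(hd.symm.mono hZsub (names_subset_snames hA)).inter_eq, Set.union_empty]
      exact hY A hA
    · rw [(hd.mono hYsub (names_subset_snames hA)).inter_eq, Set.empty_union]
      exact hZ A hA

theorem BrS_insert (hd : Disjoint A.names (snames Γ)) : BrS (insert A Γ) = BrF A ⊻ BrS Γ := by
  rw [Finset.insert_eq, BrS_union (by rwa [snames_singleton]), BrS_singleton]

theorem diff_names_mem_BrS (hd : Disjoint A.names (snames Γ)) (hX : X ∈ BrS (insert A Γ)) :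
    X \ A.names ∈ BrS Γ := by
  rw [BrS_insert hd] at hX
  obtain ⟨Y, hY, Z, hZ, rfl⟩ := hX
  rwa [Set.sup_eq_union, Set.union_sdiff_distrib,
    Set.sdiff_eq_empty.2 (subset_names_of_mem_BrF hY), Set.empty_union,
    (hd.mono_right hZ.1).symm.sdiff_eq_left]

theorem BrS_nonempty (hΓ : SFSet Γ) : (BrS Γ).Nonempty := by
  induction Γ using Finset.induction_on with
  | empty => exact ⟨∅, Set.empty_subset _, by simp⟩
  | insert A Γ hA ih =>
    rw [BrS_insert (hΓ.disjoint_snames hA)]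
    exact (BrF_nonempty A).sups (ih (hΓ.mono (Finset.subset_insert A Γ)))

/-! ## Total graphs and the cut-free rules -/

/-- A bl-graph that is total for a sequent, in the paper's sense: `Total` leaves implicit that the
graph is well-formed and the sequent sharing-free. -/
structure IsTotal (bar : α → α) (G : BLGraph) (Γ : Finset (NForm α)) : Prop where
  sfSet : SFSet Γ
  isBL : G.IsBL
  total : Total bar G Γ

namespace IsTotal

theorem mem_snames (hG : IsTotal bar G Γ) {e : Sym2 ℕ} (he : e ∈ G.Edges) (hx : x ∈ e) :
    x ∈ snames Γ := by
  obtain ⟨X, hX⟩ := he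
  obtain ⟨-, hsub, hmem⟩ := hG.isBL e X hX
  exact hG.total.1 ▸ hsub (hmem x hx)

theorem dual_of_imp (hG : IsTotal bar G Γ) (hΔ : SFSet Δ)
    (himp : ∀ x a, HasAtomS Γ x a → HasAtomS Δ x a) (he : s(x, y) ∈ G.Edges)
    (ha : HasAtomS Δ x a) (hb : HasAtomS Δ y b) : a = bar b := by
  obtain ⟨a', ha'⟩ := mem_snames_iff.1 (hG.mem_snames he (Sym2.mem_mk_left x y))
  obtain ⟨b', hb'⟩ := mem_snames_iff.1 (hG.mem_snames he (Sym2.mem_mk_right x y))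
  rw [ha.unique hΔ (himp x a' ha'), hb.unique hΔ (himp y b' hb')]
  exact hG.total.2.2 x y he a' b' ha' hb'

theorem hasAtomS_bar (hbar : Function.Involutive bar) (hG : IsTotal bar G Γ)
    (he : s(x, y) ∈ G.Edges) (ha : HasAtomS Γ x a) : HasAtomS Γ y (bar a) := by
  obtain ⟨b, hb⟩ := mem_snames_iff.1 (hG.mem_snames he (Sym2.mem_mk_right x y))
  rwa [hG.total.2.2 x y he a b ha hb, hbar b]

theorem edges_nonempty (hG : IsTotal bar G Γ) : G.Edges.Nonempty := by
  obtain ⟨X, hX⟩ := BrS_nonempty hG.sfSet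
  obtain ⟨e, he⟩ : X ∈ G.Br := hG.total.2.1 ▸ hX
  exact ⟨e, X, he⟩

end IsTotal

theorem BLGraph.Br_union (G H : BLGraph) : (G.union H).Br = G.Br ∪ H.Br := by
  ext X
  exact exists_or

theorem BLGraph.Br_blwk (V : Set ℕ) (S : Set (Set ℕ)) (G : BLGraph) :
    (blwk V S G).Br = G.Br ⊻ S := by
  ext X
  simp only [BLGraph.Br, blwk, Set.mem_ofPred_eq, Set.mem_sups, Set.sup_eq_union]
  grind

theorem BLGraph.IsBL.union (hG : G.IsBL) (hH : H.IsBL) : (G.union H).IsBL := by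
  rintro e X (h | h)
  · exact (hG e X h).imp_right (And.imp_left fun h => h.trans Set.subset_union_left)
  · exact (hH e X h).imp_right (And.imp_left fun h => h.trans Set.subset_union_right)

theorem BLGraph.IsBL.blwk (hG : G.IsBL) {V : Set ℕ} {S : Set (Set ℕ)} (hS : ∀ Z ∈ S, Z ⊆ V) :
    (blwk V S G).IsBL := by
  rintro e X ⟨Y, Z, hY, hZ, rfl⟩
  obtain ⟨hdiag, hsub, hmem⟩ := hG e Y hY
  exact ⟨hdiag, Set.union_subset_union hsub (hS Z hZ), fun v hv => Or.inl (hmem v hv)⟩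

namespace IsTotal

theorem union (hG : IsTotal bar G Γ₁) (hH : IsTotal bar H Γ₂) (hΔ : SFSet Δ)
    (hatom : ∀ x a, HasAtomS Δ x a ↔ HasAtomS Γ₁ x a ∨ HasAtomS Γ₂ x a)
    (hBr : BrS Δ = BrS Γ₁ ∪ BrS Γ₂) : IsTotal bar (G.union H) Δ := by
  refine ⟨hΔ, hG.isBL.union hH.isBL, ?_, ?_, ?_⟩
  · ext x
    simp only [BLGraph.union, hG.total.1, hH.total.1, Set.mem_union, mem_snames_iff, hatom,
      exists_or]
  · rw [BLGraph.Br_union, hG.total.2.1, hH.total.2.1, hBr]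
  · rintro x y ⟨X, he | he⟩ a b ha hb
    · exact hG.dual_of_imp hΔ (fun x a h => (hatom x a).2 (Or.inl h)) ⟨X, he⟩ ha hb
    · exact hH.dual_of_imp hΔ (fun x a h => (hatom x a).2 (Or.inr h)) ⟨X, he⟩ ha hb

theorem sup (hG : IsTotal bar G Γ) (hH : IsTotal bar H Γ) : IsTotal bar (G.union H) Γ :=
  hG.union hH hG.sfSet (fun _ _ => or_self_iff.symm) (Set.union_self _).symm

theorem and (hG : IsTotal bar G (insert A Γ)) (hH : IsTotal bar H (insert B Γ))
    (hAB : Disjoint A.names B.names) (hA : Disjoint A.names (snames Γ))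
    (hB : Disjoint B.names (snames Γ)) : IsTotal bar (G.union H) (insert (.and A B) Γ) := by
  have hd : Disjoint (NForm.and A B).names (snames Γ) := hA.union_left hB
  have hsf : (NForm.and A B).sharingFree :=
    ⟨hG.sfSet.1 A (Finset.mem_insert_self A Γ), hH.sfSet.1 B (Finset.mem_insert_self B Γ), hAB⟩
  refine hG.union hH ((hG.sfSet.mono (Finset.subset_insert A Γ)).insert_formula hsf hd) ?_ ?_
  · simp only [hasAtomS_insert, HasAtom]
    tauto
  · rw [BrS_insert hd, BrS_insert hA, BrS_insert hB, BrF_and, Set.sups_union_left]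

theorem or (hG : IsTotal bar G (insert A (insert B Γ))) (hAB : Disjoint A.names B.names)
    (hA : Disjoint A.names (snames Γ)) (hB : Disjoint B.names (snames Γ)) :
    IsTotal bar G (insert (.or A B) Γ) := by
  have hd : Disjoint (NForm.or A B).names (snames Γ) := hA.union_left hB
  have hΓ : SFSet Γ := hG.sfSet.mono ((Finset.subset_insert B Γ).trans (Finset.subset_insert A _))
  have hsf : (NForm.or A B).sharingFree :=
    ⟨hG.sfSet.1 A (by simp), hG.sfSet.1 B (by simp), hAB⟩
  refine ⟨hΓ.insert_formula hsf hd, hG.isBL, ?_, ?_, ?_⟩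
  · rw [hG.total.1, snames_insert, snames_insert, snames_insert, NForm.names, Set.union_assoc]
  · rw [hG.total.2.1, BrS_insert (by rw [snames_insert]; exact hAB.union_right hA),
      BrS_insert hB, BrS_insert hd, BrF_or, Set.sups_assoc]
  · simpa only [hasAtomS_insert, HasAtom, or_assoc] using hG.total.2.2

theorem blwk (hG : IsTotal bar G Γ) (hΔ : SFSet Δ) (hd : Disjoint (snames Γ) (snames Δ)) :
    IsTotal bar (blwk (snames Δ) (BrS Δ) G) (Γ ∪ Δ) := by
  have hsf := hG.sfSet.union hΔ hd
  refine ⟨hsf, hG.isBL.blwk fun Z hZ => hZ.1, ?_, ?_, ?_⟩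
  · rw [snames_union, ← hG.total.1]
    rfl
  · rw [BLGraph.Br_blwk, hG.total.2.1, BrS_union hd]
  · rintro x y ⟨_, Y, Z, he, -⟩ a b ha hb
    exact hG.dual_of_imp hsf (fun _ _ => HasAtomS.mono Finset.subset_union_left) ⟨Y, he⟩ ha hb

theorem blwk_formula (hG : IsTotal bar G Γ) (hA : A.sharingFree)
    (hd : Disjoint A.names (snames Γ)) : IsTotal bar (GS4.blwk A.names (BrF A) G) (insert A Γ) := by
  have h := hG.blwk (sfSet_singleton hA) (by rwa [snames_singleton, disjoint_comm])
  rwa [snames_singleton, BrS_singleton, Finset.union_comm, ← Finset.insert_eq] at h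

/-! ## Identities -/

theorem blid_atom (hbar : Function.Involutive bar) (hxy : x ≠ y) (b : α) :
    IsTotal bar (blid (.atom x (bar b)) (.atom y b)) {.atom x (bar b), .atom y b} := by
  have hd : Disjoint (NForm.atom x (bar b)).names (snames {NForm.atom y b}) := by
    simpa [snames_singleton, NForm.names] using hxy
  have hsf : SFSet {NForm.atom x (bar b), .atom y b} :=
    (sfSet_singleton (A := .atom y b) trivial).insert_formula (A := .atom x (bar b)) trivial hd
  refine ⟨hsf, ?_, ?_, ?_, ?_⟩
  · rintro _ _ ⟨rfl, rfl⟩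
    exact ⟨by simpa using hxy, subset_rfl, by simp⟩
  · rw [snames_insert, snames_singleton]
    rfl
  · rw [BrS_insert hd, BrS_singleton, BrF, BrF, Set.singleton_sups_singleton]
    ext X
    simp [BLGraph.Br, blid, Set.sup_eq_union, Set.pair_comm]
  · rintro u v ⟨X, he, -⟩ a c ha hc
    simp only [HasAtomS, Finset.mem_insert, Finset.mem_singleton, exists_eq_or_imp,
      exists_eq_left, HasAtom] at ha hc
    have := hbar b
    grind

theorem blwk_union_blwk (hG : IsTotal bar G {A, C}) (hH : IsTotal bar H {B, D})
    (hAB : Disjoint A.names B.names) (hCD : Disjoint C.names D.names)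
    (hd : Disjoint (NForm.or A B).names (NForm.and C D).names) :
    IsTotal bar ((GS4.blwk B.names (BrF B) G).union (GS4.blwk A.names (BrF A) H))
      {.or A B, .and C D} := by
  simp only [NForm.names, Set.disjoint_union_left, Set.disjoint_union_right] at hd
  obtain ⟨⟨hAC, hBC⟩, hAD, hBD⟩ := hd
  have hG' : IsTotal bar (GS4.blwk B.names (BrF B) G) {C, A, B} := by
    have h := hG.blwk_formula (hH.sfSet.1 B (by simp)) (A := B)
      (by simp [snames_insert, snames_singleton, hAB.symm, hBC])
    rwa [Finset.insert_comm, Finset.pair_comm, Finset.insert_comm] at h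
  have hH' : IsTotal bar (GS4.blwk A.names (BrF A) H) {D, A, B} := by
    have h := hH.blwk_formula (hG.sfSet.1 A (by simp)) (A := A)
      (by simp [snames_insert, snames_singleton, hAB, hAD])
    rwa [Finset.pair_comm, Finset.insert_comm] at h
  have h := hG'.and hH' hCD (by simp [snames_insert, snames_singleton, hAC.symm, hBC.symm])
    (by simp [snames_insert, snames_singleton, hAD.symm, hBD.symm])
  rw [Finset.insert_comm, Finset.pair_comm] at h
  exact h.or hAB (by simp [snames_singleton, NForm.names, hAC, hAD])
    (by simp [snames_singleton, NForm.names, hBC, hBD])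

end IsTotal

theorem IsTotal.blid (hbar : Function.Involutive bar) (hAC : A.shape = (negF bar C).shape)
    (hA : A.sharingFree) (hC : C.sharingFree) (hd : Disjoint A.names C.names) :
    IsTotal bar (blid A C) {A, C} := by
  induction A generalizing C with
  | atom x a =>
    cases C with
    | atom y b =>
      obtain rfl : a = bar b := by simpa [NForm.shape, negF] using hAC
      exact IsTotal.blid_atom hbar (by simpa [NForm.names] using hd) b
    | or C D | and C D => simp [NForm.shape, negF] at hAC
  | or A B ihA ihB =>
    cases C with
    | and C D =>
      obtain ⟨hsA, hsB⟩ := Shape.or.inj hAC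
      obtain ⟨hA, hB, hAB⟩ := hA
      obtain ⟨hC, hD, hCD⟩ := hC
      exact (ihA hsA hA hC (hd.mono Set.subset_union_left Set.subset_union_left)).blwk_union_blwk
        (ihB hsB hB hD (hd.mono Set.subset_union_right Set.subset_union_right)) hAB hCD hd
    | atom y b | or C D => simp [NForm.shape, negF] at hAC
  | and A B ihA ihB =>
    cases C with
    | or C D =>
      obtain ⟨hsA, hsB⟩ := Shape.and.inj hAC
      obtain ⟨hA, hB, hAB⟩ := hA
      obtain ⟨hC, hD, hCD⟩ := hC
      have hAC := ihA hsA hA hC (hd.mono Set.subset_union_left Set.subset_union_left)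
      have hBD := ihB hsB hB hD (hd.mono Set.subset_union_right Set.subset_union_right)
      rw [Finset.pair_comm] at hAC hBD ⊢
      exact hAC.blwk_union_blwk hBD hCD hAB hd.symm
    | atom y b | and C D => simp [NForm.shape, negF] at hAC

/-! ## Directed paths in composites -/

/-- The edges of `G` labelled `X` off the interface `I`, oriented from a name failing `p` to a name
satisfying `p`; in the application `p` says that a name carries a positive atom. -/
def BLGraph.Step (G : BLGraph) (I X : Set ℕ) (p : ℕ → Prop) (x y : ℕ) : Prop :=
  G.relI I s(x, y) X ∧ ¬ p x ∧ p y

-- Without such a path, no edge respects the set `T` of names whose reachability agrees with `p`.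
theorem BLGraph.exists_reflTransGen_step {p q : ℕ → Prop} (hpq : ∀ x, q x ↔ (p x ↔ x ∉ I))
    (hT : ∀ T : Set ℕ,
      (∃ x y, G.Step I X p x y ∧ (x ∈ I → x ∉ T) ∧ (y ∈ I → y ∉ T)) ∨
      (∃ x y, H.Step I X q x y ∧ (x ∈ I → x ∈ T) ∧ (y ∈ I → y ∈ T))) :
    ∃ s t, s ∉ I ∧ t ∉ I ∧ ¬ p s ∧ p t ∧
      Relation.ReflTransGen (fun x y => G.Step I X p x y ∨ H.Step I X q x y) s t := by
  by_contra! hno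
  let reachable (x : ℕ) : Prop := ∃ s, s ∉ I ∧ ¬ p s ∧
    Relation.ReflTransGen (fun x y => G.Step I X p x y ∨ H.Step I X q x y) s x
  have source {x : ℕ} (hx : x ∉ I) (hp : ¬ p x) : reachable x := ⟨x, hx, hp, .refl⟩
  have sink {x : ℕ} (hx : x ∉ I) (hp : p x) : ¬ reachable x := fun ⟨s, hs, hps, h⟩ =>
    hno s x hs hx hps hp h
  have step {x y : ℕ} (h : G.Step I X p x y ∨ H.Step I X q x y) :
      reachable x → reachable y := fun ⟨s, hs, hps, hsx⟩ => ⟨s, hs, hps, hsx.tail h⟩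
  rcases hT {x | reachable x ↔ p x} with ⟨x, y, hxy, hx, hy⟩ | ⟨x, y, hxy, hx, hy⟩
  · have ⟨_, hpx, hpy⟩ := hxy
    have hxR : reachable x := by
      by_cases hxI : x ∈ I
      · exact not_not.1 fun h => hx hxI (iff_of_false h hpx)
      · exact source hxI hpx
    have hyR : reachable y := step (.inl hxy) hxR
    by_cases hyI : y ∈ I
    · exact hy hyI (iff_of_true hyR hpy)
    · exact sink hyI hpy hyR
  · have ⟨_, hqx, hqy⟩ := hxy
    rw [hpq] at hqx hqy
    have hxR : reachable x := by
      by_cases hxI : x ∈ I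
      · exact (hx hxI).2 (by tauto)
      · exact source hxI (by tauto)
    have hyR : reachable y := step (.inr hxy) hxR
    by_cases hyI : y ∈ I
    · exact (hqy.1 ((hy hyI).1 hyR)) hyI
    · exact sink hyI (hqy.2 hyI) hyR

theorem BLGraph.altPath_of_steps {p q : ℕ → Prop} (hpq : ∀ x, q x ↔ (p x ↔ x ∉ I)) {n : ℕ}
    {z : ℕ → ℕ} (hn : 0 < n) (hinj : Set.InjOn z (Set.Iic n))
    (hz : ∀ i < n, G.Step I X p (z i) (z (i + 1)) ∨ H.Step I X q (z i) (z (i + 1))) :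
    AltPath G H I X (n + 1) z := by
  have internal {i : ℕ} (hi : i + 1 < n) : z (i + 1) ∈ I := by
    have := hpq (z (i + 1))
    have := hz i (by omega)
    have := hz (i + 1) hi
    simp only [Step] at *
    tauto
  have fromG {i : ℕ} (hi : i + 1 < n) (h : G.Step I X p (z i) (z (i + 1))) :
      H.Step I X q (z (i + 1)) (z (i + 2)) :=
    (hz (i + 1) hi).resolve_left fun h' => h'.2.1 h.2.2
  have fromH {i : ℕ} (hi : i + 1 < n) (h : H.Step I X q (z i) (z (i + 1))) :
      G.Step I X p (z (i + 1)) (z (i + 2)) :=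
    (hz (i + 1) hi).resolve_right fun h' => h'.2.1 h.2.2
  refine ⟨by omega, fun i hi j hj => hinj (Nat.le_of_lt_succ hi) (Nat.le_of_lt_succ hj),
    fun i hi hin => ?_, ?_⟩
  · obtain ⟨i, rfl⟩ := Nat.exists_eq_add_of_lt hi
    rw [zero_add] at hin ⊢
    exact internal (by omega)
  · rcases hz 0 hn with h0 | h0
    · have h := even_odd_of_alternation (n := n)
        (g := fun i => G.Step I X p (z i) (z (i + 1)))
        (h := fun i => H.Step I X q (z i) (z (i + 1)))
        h0 (fun i hi _ => fromG hi) (fun i hi _ => fromH hi)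
      exact .inl fun i hi => (h i (by omega)).imp (fun h he => (h he).1) fun h he => (h he).1
    · have h := even_odd_of_alternation (n := n)
        (g := fun i => H.Step I X q (z i) (z (i + 1)))
        (h := fun i => G.Step I X p (z i) (z (i + 1)))
        h0 (fun i hi _ => fromH hi) (fun i hi _ => fromG hi)
      exact .inr fun i hi => (h i (by omega)).imp (fun h he => (h he).1) fun h he => (h he).1

theorem BLGraph.mem_Br_comp {p q : ℕ → Prop} (hpq : ∀ x, q x ↔ (p x ↔ x ∉ I))
    (hT : ∀ T : Set ℕ,
      (∃ x y, G.Step I X p x y ∧ (x ∈ I → x ∉ T) ∧ (y ∈ I → y ∉ T)) ∨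
      (∃ x y, H.Step I X q x y ∧ (x ∈ I → x ∈ T) ∧ (y ∈ I → y ∈ T))) :
    X ∈ (G.comp H I).Br := by
  obtain ⟨s, t, hs, ht, hps, hpt, hst⟩ := exists_reflTransGen_step hpq hT
  obtain ⟨n, z, rfl, rfl, hinj, hz⟩ := exists_injOn_path_of_reflTransGen hst
  have hn : 0 < n := Nat.pos_of_ne_zero fun h => hps (h ▸ hpt)
  exact ⟨_, n + 1, z, altPath_of_steps hpq hn hinj hz, hs, ht, rfl⟩

/-! ## Polarities -/

theorem exists_valuation (hbar : Function.Involutive bar) (hfix : ∀ a, bar a ≠ a) :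
    ∃ v : α → Prop, ∀ a, v (bar a) ↔ ¬ v a := by
  refine ⟨fun a => WellOrderingRel a (bar a), fun a => ?_⟩
  simp only [hbar a]
  exact ⟨fun h h' => asymm_of WellOrderingRel h h', fun h =>
    ((trichotomous_of WellOrderingRel a (bar a)).resolve_left h).resolve_left (hfix a).symm⟩

/-- The name `x` carries, in the sequent `Γ`, an atom that is true under the valuation `v`. -/
def Positive (v : α → Prop) (Γ : Finset (NForm α)) (x : ℕ) : Prop :=
  ∃ a, HasAtomS Γ x a ∧ v a

theorem HasAtomS.positive_iff {v : α → Prop} (hΓ : SFSet Γ) (ha : HasAtomS Γ x a) :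
    Positive v Γ x ↔ v a :=
  ⟨fun ⟨_, hb, hv⟩ => ha.unique hΓ hb ▸ hv, fun hv => ⟨a, ha, hv⟩⟩

theorem positive_insert_negF_iff {v : α → Prop} (hv : ∀ a, v (bar a) ↔ ¬ v a)
    (hA : SFSet (insert A Γ)) (hA' : SFSet (insert (negF bar A) Γ))
    (hd : Disjoint A.names (snames Γ)) (x : ℕ) :
    Positive v (insert (negF bar A) Γ) x ↔ (Positive v (insert A Γ) x ↔ x ∉ A.names) := by
  by_cases hx : x ∈ A.names
  · obtain ⟨a, ha⟩ := NForm.mem_names_iff.1 hx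
    have ha : HasAtomS (insert A Γ) x a := hasAtomS_insert.2 (.inl ha)
    rw [ha.positive_iff hA, (ha.insert_negF bar hd hx).positive_iff hA', hv]
    tauto
  · have hx' : x ∉ (negF bar A).names := by rwa [names_negF]
    simp only [Positive, hasAtomS_insert_of_notMem hx, hasAtomS_insert_of_notMem hx']
    tauto

theorem IsTotal.exists_orientation {v : α → Prop} (hv : ∀ a, v (bar a) ↔ ¬ v a)
    (hG : IsTotal bar G Γ) {e : Sym2 ℕ} (he : e ∈ G.Edges) :
    ∃ x y, e = s(x, y) ∧ ¬ Positive v Γ x ∧ Positive v Γ y := by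
  induction e using Sym2.ind with | _ x y
  obtain ⟨a, ha⟩ := mem_snames_iff.1 (hG.mem_snames he (Sym2.mem_mk_left x y))
  obtain ⟨b, hb⟩ := mem_snames_iff.1 (hG.mem_snames he (Sym2.mem_mk_right x y))
  have hxy : Positive v Γ x ↔ ¬ Positive v Γ y := by
    rw [ha.positive_iff hG.sfSet, hb.positive_iff hG.sfSet, hG.total.2.2 x y he a b ha hb, hv]
  by_cases hy : Positive v Γ y
  · exact ⟨x, y, rfl, fun hx => hxy.1 hx hy, hy⟩
  · exact ⟨y, x, Sym2.eq_swap, hy, hxy.2 hy⟩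

theorem IsTotal.exists_step {v : α → Prop} (hv : ∀ a, v (bar a) ↔ ¬ v a)
    (hG : IsTotal bar G (insert A Γ)) (hd : Disjoint A.names (snames Γ)) (hX : X ∈ BrS Γ)
    {Y : Set ℕ} (hY : Y ∈ BrF A) :
    ∃ x y, G.Step A.names X (Positive v (insert A Γ)) x y ∧
      (x ∈ A.names → x ∈ Y) ∧ (y ∈ A.names → y ∈ Y) := by
  have hXA : Disjoint A.names X := hd.mono_right hX.1
  have hYX : (Y ∪ X) \ A.names = X := by
    rw [Set.union_sdiff_distrib, Set.sdiff_eq_empty.2 (subset_names_of_mem_BrF hY),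
      Set.empty_union, hXA.symm.sdiff_eq_left]
  obtain ⟨e, he⟩ : Y ∪ X ∈ G.Br := by
    rw [hG.total.2.1, BrS_insert hd]
    exact Set.sup_mem_sups hY hX
  have mem_Y {u : ℕ} (hu : u ∈ e) (huA : u ∈ A.names) : u ∈ Y :=
    ((hG.isBL e _ he).2.2 u hu).resolve_right (Set.disjoint_left.1 hXA huA)
  obtain ⟨x, y, rfl, hx, hy⟩ := hG.exists_orientation hv ⟨_, he⟩
  exact ⟨x, y, ⟨⟨Y ∪ X, he, hYX.symm⟩, hx, hy⟩, mem_Y (Sym2.mem_mk_left x y),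
    mem_Y (Sym2.mem_mk_right x y)⟩

/-! ## Composition -/

theorem AltPath.relI_union {n i : ℕ} {z : ℕ → ℕ} (hz : AltPath G H I X n z) (hi : i + 1 < n) :
    (G.union H).relI I s(z i, z (i + 1)) X := by
  have ofG (h : G.relI I s(z i, z (i + 1)) X) : (G.union H).relI I s(z i, z (i + 1)) X :=
    h.imp fun _ => And.imp_left Or.inl
  have ofH (h : H.relI I s(z i, z (i + 1)) X) : (G.union H).relI I s(z i, z (i + 1)) X :=
    h.imp fun _ => And.imp_left Or.inr
  rcases hz.2.2.2 with h | h <;> by_cases heven : Even i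
  · exact ofG ((h i hi).1 heven)
  · exact ofH ((h i hi).2 heven)
  · exact ofH ((h i hi).1 heven)
  · exact ofG ((h i hi).2 heven)

theorem BLGraph.IsBL.comp (hG : G.IsBL) (hH : H.IsBL) (I : Set ℕ) : (G.comp H I).IsBL := by
  rintro e X ⟨n, z, hz, h0, hlast, rfl⟩
  obtain ⟨m, rfl⟩ := Nat.exists_eq_add_of_le' hz.1
  obtain ⟨Y, hY, rfl⟩ := hz.relI_union (i := 0) (by omega)
  obtain ⟨Z, hZ, hYZ⟩ := hz.relI_union (i := m) (by omega)
  obtain ⟨-, hYsub, hYmem⟩ := hG.union hH _ Y hY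
  obtain ⟨-, -, hZmem⟩ := hG.union hH _ Z hZ
  refine ⟨fun h => ?_, Set.sdiff_subset_sdiff_left hYsub, fun v hv => ?_⟩
  · have := hz.2.1 0 (by omega) (m + 1) (by omega) h
    omega
  · rcases Sym2.mem_iff.1 hv with rfl | rfl
    · exact ⟨hYmem _ (Sym2.mem_mk_left _ _), h0⟩
    · exact hYZ ▸ ⟨hZmem _ (Sym2.mem_mk_right _ _), hlast⟩

theorem BLGraph.relI.mem_Edges {e : Sym2 ℕ} (h : G.relI I e X) : e ∈ G.Edges :=
  h.imp fun _ => And.left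

namespace IsTotal

theorem hasAtomS_insert_negF (hbar : Function.Involutive bar) (hG : IsTotal bar G (insert A Γ))
    (hd : Disjoint A.names (snames Γ)) (he : s(x, y) ∈ G.Edges) (hy : y ∈ A.names)
    (ha : HasAtomS (insert A Γ) x a) : HasAtomS (insert (negF bar A) Γ) y a :=
  hbar a ▸ (hG.hasAtomS_bar hbar he ha).insert_negF bar hd hy

-- The atom is dualised along every edge and again when the path passes from `A` to its negation.
theorem hasAtomS_bar_of_alternation (hbar : Function.Involutive bar)
    (hG : IsTotal bar G (insert A Γ)) (hH : IsTotal bar H (insert (negF bar A) Γ))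
    (hd : Disjoint A.names (snames Γ)) {n : ℕ} {z : ℕ → ℕ}
    (hz : ∀ i < n + 1, (Even i → G.relI A.names s(z i, z (i + 1)) X) ∧
      (¬ Even i → H.relI A.names s(z i, z (i + 1)) X))
    (hinternal : ∀ i < n, z (i + 1) ∈ A.names) (hlast : z (n + 1) ∉ A.names)
    (ha : HasAtomS Γ (z 0) a) : HasAtomS Γ (z (n + 1)) (bar a) := by
  have hatoms := even_odd_of_alternation (n := n + 1)
    (g := fun i => HasAtomS (insert A Γ) (z i) a)
    (h := fun i => HasAtomS (insert (negF bar A) Γ) (z i) a)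
    (hasAtomS_insert.2 (.inr ha))
    (fun i hi heven => hG.hasAtomS_insert_negF hbar hd ((hz i (by omega)).1 heven).mem_Edges
      (hinternal i (by omega)))
    (fun i hi hodd h => negF_negF hbar A ▸ hH.hasAtomS_insert_negF hbar
      (by rwa [names_negF]) ((hz i (by omega)).2 hodd).mem_Edges
      (by rw [names_negF]; exact hinternal i (by omega)) h)
  by_cases heven : Even n
  · rw [← hasAtomS_insert_of_notMem hlast]
    exact hG.hasAtomS_bar hbar ((hz n n.lt_succ_self).1 heven).mem_Edges
      ((hatoms n n.lt_succ_self).1 heven)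
  · rw [← hasAtomS_insert_of_notMem (A := negF bar A) (by rwa [names_negF])]
    exact hH.hasAtomS_bar hbar ((hz n n.lt_succ_self).2 heven).mem_Edges
      ((hatoms n n.lt_succ_self).2 heven)

theorem hasAtomS_bar_of_altPath (hbar : Function.Involutive bar)
    (hG : IsTotal bar G (insert A Γ)) (hH : IsTotal bar H (insert (negF bar A) Γ))
    (hd : Disjoint A.names (snames Γ)) {n : ℕ} {z : ℕ → ℕ} (hz : AltPath G H A.names X n z)
    (hlast : z (n - 1) ∉ A.names) (ha : HasAtomS Γ (z 0) a) :
    HasAtomS Γ (z (n - 1)) (bar a) := by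
  obtain ⟨hn, -, hinternal, halt⟩ := hz
  obtain ⟨m, rfl⟩ := Nat.exists_eq_add_of_le' hn
  have hinternal : ∀ i < m, z (i + 1) ∈ A.names := fun i hi =>
    hinternal (i + 1) i.succ_pos (by omega)
  rcases halt with halt | halt
  · exact hG.hasAtomS_bar_of_alternation hbar hH hd (fun i hi => halt i (by omega)) hinternal
      hlast ha
  · rw [← names_negF bar A] at hd hinternal hlast halt
    rw [← negF_negF hbar A] at hG
    exact hH.hasAtomS_bar_of_alternation hbar hG hd (fun i hi => halt i (by omega)) hinternal
      hlast ha

theorem BrS_subset_Br_comp (hbar : Function.Involutive bar) (hfix : ∀ a, bar a ≠ a)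
    (hG : IsTotal bar G (insert A Γ)) (hH : IsTotal bar H (insert (negF bar A) Γ))
    (hd : Disjoint A.names (snames Γ)) : BrS Γ ⊆ (G.comp H A.names).Br := by
  intro X hX
  obtain ⟨v, hv⟩ := exists_valuation hbar hfix
  refine BLGraph.mem_Br_comp (positive_insert_negF_iff hv hG.sfSet hH.sfSet hd) fun T => ?_
  rcases exists_mem_BrF_disjoint_or_exists_subset bar A T with ⟨Y, hY, hYT⟩ | ⟨Y, hY, hYT⟩
  · obtain ⟨x, y, hxy, hx, hy⟩ := hG.exists_step hv hd hX hY
    exact .inl ⟨x, y, hxy, fun h => Set.disjoint_left.1 hYT (hx h),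
      fun h => Set.disjoint_left.1 hYT (hy h)⟩
  · obtain ⟨x, y, hxy, hx, hy⟩ := hH.exists_step hv (by rwa [names_negF]) hX hY
    rw [names_negF] at hxy hx hy
    exact .inr ⟨x, y, hxy, fun h => hYT (hx h), fun h => hYT (hy h)⟩

theorem Br_comp_subset_BrS (hG : IsTotal bar G (insert A Γ))
    (hH : IsTotal bar H (insert (negF bar A) Γ)) (hd : Disjoint A.names (snames Γ)) :
    (G.comp H A.names).Br ⊆ BrS Γ := by
  rintro X ⟨_, n, z, hz, -⟩
  obtain ⟨Y, hY | hY, rfl⟩ := hz.relI_union (i := 0) hz.1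
  · exact diff_names_mem_BrS hd (hG.total.2.1 ▸ ⟨_, hY⟩)
  · rw [← names_negF bar A] at hd ⊢
    exact diff_names_mem_BrS hd (hH.total.2.1 ▸ ⟨_, hY⟩)

theorem comp (hbar : Function.Involutive bar) (hfix : ∀ a, bar a ≠ a)
    (hG : IsTotal bar G (insert A Γ)) (hH : IsTotal bar H (insert (negF bar A) Γ))
    (hd : Disjoint A.names (snames Γ)) : IsTotal bar (G.comp H A.names) Γ := by
  have hΓ : SFSet Γ := hG.sfSet.mono (Finset.subset_insert A Γ)
  refine ⟨hΓ, hG.isBL.comp hH.isBL _, ?_,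
    (hG.Br_comp_subset_BrS hH hd).antisymm (hG.BrS_subset_Br_comp hbar hfix hH hd), ?_⟩
  · change (G.verts ∪ H.verts) \ A.names = snames Γ
    rw [hG.total.1, hH.total.1, snames_insert, snames_insert, names_negF, Set.union_self,
      Set.union_sdiff_left, hd.symm.sdiff_eq_left]
  · rintro x y ⟨X, n, z, hz, -, hlast, he⟩ a b ha hb
    rcases Sym2.eq_iff.1 he with ⟨rfl, rfl⟩ | ⟨rfl, rfl⟩
    · rw [hb.unique hΓ (hG.hasAtomS_bar_of_altPath hbar hH hd hz hlast ha), hbar]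
    · exact ha.unique hΓ (hG.hasAtomS_bar_of_altPath hbar hH hd hz hlast hb)

theorem blaxg (hbar : Function.Involutive bar) (hfix : ∀ a, bar a ≠ a) {P : Deriv α}
    (hP : WF bar P) : IsTotal bar (blaxg P) (concl P) := by
  induction P with
  | ax Γ A C =>
    obtain ⟨hAC, hA, hC, hΓ, hdisj, hAΓ, hCΓ⟩ := hP
    have h := (IsTotal.blid hbar hAC hA hC hdisj).blwk hΓ
      (by simpa [snames_insert, snames_singleton] using ⟨hAΓ, hCΓ⟩)
    rwa [Finset.insert_union, ← Finset.insert_eq] at h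
  | cut A P Q ihP ihQ =>
    obtain ⟨hP, hQ, Γ, hAΓ, -, hcP, hcQ, -, -, hd⟩ := hP
    simp only [concl, hcP, Finset.erase_insert hAΓ]
    exact (hcP ▸ ihP hP).comp hbar hfix (hcQ ▸ ihQ hQ) hd
  | sup P Q ihP ihQ =>
    obtain ⟨hP, hQ, hc⟩ := hP
    exact (ihP hP).sup (hc ▸ ihQ hQ)
  | orI A B P ihP =>
    obtain ⟨hP, Γ, hA, hB, hne, hc, -, -, -, hAB, hAΓ, hBΓ⟩ := hP
    have hA : A ∉ insert B Γ := by simp [hA, hne]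
    simp only [concl, hc, Finset.erase_insert hA, Finset.erase_insert hB]
    exact (hc ▸ ihP hP).or hAB hAΓ hBΓ
  | andI A B P Q ihP ihQ =>
    obtain ⟨hP, hQ, Γ, hA, -, hcP, hcQ, -, -, -, hAB, hAΓ, hBΓ⟩ := hP
    simp only [concl, hcP, Finset.erase_insert hA]
    exact (hcP ▸ ihP hP).and (hcQ ▸ ihQ hQ) hAB hAΓ hBΓ

end IsTotal

theorem semantic_cut_admissibility_general (hbar : Function.Involutive bar)
    (hfix : ∀ a, bar a ≠ a) (hd : Disjoint A.names (snames Γ)) {P Q : Deriv α}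
    (hP : WF bar P) (hQ : WF bar Q) (hcP : concl P = insert A Γ)
    (hcQ : concl Q = insert (negF bar A) Γ) :
    ((blaxg P).comp (blaxg Q) A.names).Edges.Nonempty := by
  have hG : IsTotal bar (blaxg P) (insert A Γ) := hcP ▸ IsTotal.blaxg hbar hfix hP
  have hH : IsTotal bar (blaxg Q) (insert (negF bar A) Γ) := hcQ ▸ IsTotal.blaxg hbar hfix hQ
  exact (hG.comp hbar hfix hH hd).edges_nonempty

end GS4

/-- Semantic cut-admissibility: the composite of the bl-axiom
graphs of two cut-free derivations over an atomic context has an edge. -/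
theorem GS4.semantic_cut_admissibility {α : Type} (bar : α → α)
    (hbar : Function.Involutive bar) (hfix : ∀ a, bar a ≠ a)
    (Γ : Finset (GS4.NForm α)) (A : GS4.NForm α)
    (hΓ : GS4.SFSet Γ) (hatomic : ∀ F ∈ Γ, F.isAtom)
    (hA : A.sharingFree) (hd : Disjoint A.names (GS4.snames Γ))
    (hAΓ : A ∉ Γ) (hAΓ' : GS4.negF bar A ∉ Γ)
    (P Q : GS4.Deriv α) (hP : GS4.WF bar P) (hQ : GS4.WF bar Q)
    (hcfP : GS4.CutFree P) (hcfQ : GS4.CutFree Q)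
    (hcP : GS4.concl P = insert A Γ)
    (hcQ : GS4.concl Q = insert (GS4.negF bar A) Γ) :
    ((GS4.blaxg P).comp (GS4.blaxg Q) A.names).Edges.Nonempty := by
  exact GS4.semantic_cut_admissibility_general hbar hfix hd hP hQ hcP hcQ
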